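/- arXiv:2002.00870 — 2 statements merged into one kernel-verified Lean document; each statement's English description precedes it below -/
import Mathlib

section
/- Let 1 ≤ p < ∞ and f ∈ L^p(ℝ^{m-1}×𝔹^m, ℋ_k). For y > 0 set g_y(x′,v) := P_H[f]((x′,y),v). Then ‖g_y − f‖_p → 0 as y → 0⁺. -/
noncomputable section

open MeasureTheory Metric Filter Topology
open scoped RealInnerProductSpace

/-- `ℝ^m` as a Euclidean space. -/
abbrev Evec (m : ℕ) : Type := EuclideanSpace ℝ (Fin m)

/-- Partial derivative in the `i`-th coordinate direction. -/
def pdv {m : ℕ} (i : Fin m) (f : Evec m → ℝ) (x : Evec m) : ℝ :=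
  fderiv ℝ f x (EuclideanSpace.single i 1)

/-- Euclidean Laplacian on `ℝ^m`. -/
def lapl {m : ℕ} (f : Evec m → ℝ) (x : Evec m) : ℝ :=
  ∑ i : Fin m, pdv i (pdv i f) x

/-- `p` is a real-valued polynomial function on `ℝ^m`, homogeneous of degree `k` and
harmonic; i.e. `p ∈ ℋ_k`. -/
def IsHk (m k : ℕ) (p : Evec m → ℝ) : Prop :=
  (∃ P : MvPolynomial (Fin m) ℝ, ∀ x : Evec m, p x = MvPolynomial.eval (fun i => x i) P) ∧
  (∀ (c : ℝ) (x : Evec m), p (c • x) = c ^ k * p x) ∧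
  (∀ x : Evec m, lapl p x = 0)

/-- The surface measure `dS` on the unit sphere `𝕊^{m-1}`, as a measure on `ℝ^m`. -/
def sphereM (m : ℕ) : Measure (Evec m) :=
  Measure.map Subtype.val ((volume : Measure (Evec m)).toSphere)

/-- `ω_m`, the surface area of the unit sphere `𝕊^{m-1}`. -/
def omegaS (m : ℕ) : ℝ := (sphereM m Set.univ).toReal

/-- The constant `c_{m,k} = 2(m+2k-2)/((m-2)ω_m)`. -/
def cmk (m k : ℕ) : ℝ := 2 * ((m : ℝ) + 2 * k - 2) / (((m : ℝ) - 2) * omegaS m)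

/-- The reflection `R_a(u) = u - 2⟨a,u⟩a/|a|²` (in Clifford notation `a u a/|a|²`). -/
def reflv {m : ℕ} (a u : Evec m) : Evec m :=
  u - (2 * ⟪a, u⟫ / ‖a‖ ^ 2) • a

/-- `dim ℋ_k`. -/
def hdim (m k : ℕ) : ℕ :=
  Nat.choose (m + k - 1) (m - 1) - Nat.choose (m + k - 3) (m - 1)

/-- `Z` is the reproducing kernel `Z_k` of `ℋ_k` on the unit sphere: a symmetric,
rotation invariant kernel, bounded by `dim ℋ_k` on the unit ball, belonging to `ℋ_k`
in the first variable and reproducing elements of `ℋ_k` from their spherical values. -/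
def IsZk (m k : ℕ) (Z : Evec m → Evec m → ℝ) : Prop :=
  (∀ v : Evec m, IsHk m k (fun u => Z u v)) ∧
  (∀ p : Evec m → ℝ, IsHk m k p → ∀ v : Evec m, (∫ u, Z u v * p u ∂(sphereM m)) = p v) ∧
  (∀ u v : Evec m, Z u v = Z v u) ∧
  (∀ u v : Evec m, ‖u‖ ≤ 1 → ‖v‖ ≤ 1 → |Z u v| ≤ (hdim m k : ℝ)) ∧
  (∀ (A : Evec m ≃ₗᵢ[ℝ] Evec m) (u v : Evec m), Z (A u) (A v) = Z u v)

/-- The point `(x', y) ∈ ℝ^{d+1}` with first `d` coordinates `x'` and last coordinate `y`. -/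
def upP (d : ℕ) (x' : Evec d) (y : ℝ) : Evec (d + 1) :=
  (EuclideanSpace.equiv (Fin (d + 1)) ℝ).symm
    (Fin.snoc (⇑(EuclideanSpace.equiv (Fin d) ℝ) x') y)

/-- The first `d` coordinates of a point of `ℝ^{d+1}`. -/
def downP (d : ℕ) (x : Evec (d + 1)) : Evec d :=
  (EuclideanSpace.equiv (Fin d) ℝ).symm (fun i => x (Fin.castSucc i))

/-- The last coordinate of a point of `ℝ^{d+1}`. -/
def lastP (d : ℕ) (x : Evec (d + 1)) : ℝ := x (Fin.last d)

/-- The Poisson kernel `P_H` for bosonic Laplacians in the upper half-space `ℝ^{d+1}_+`,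
`P_H(x,t,u,v) = c_{m,k} (y/|x-t|^m) Z_k(R_{x-t}(u), v)` with `m = d+1`, `x = (x',y)`,
`t = (t',0)`. -/
def PH (d k : ℕ) (Z : Evec (d + 1) → Evec (d + 1) → ℝ) (x' : Evec d) (y : ℝ)
    (t' : Evec d) (u v : Evec (d + 1)) : ℝ :=
  cmk (d + 1) k * (y / ‖upP d x' y - upP d t' 0‖ ^ (d + 1)) *
    Z (reflv (upP d x' y - upP d t' 0) u) v

/-- The Poisson integral `P_H[f]` in the upper half-space. -/
def PHint (d k : ℕ) (Z : Evec (d + 1) → Evec (d + 1) → ℝ)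
    (f : Evec d → Evec (d + 1) → ℝ) (x' : Evec d) (y : ℝ) (v : Evec (d + 1)) : ℝ :=
  ∫ t' : Evec d, (∫ u, PH d k Z x' y t' u v * f t' u ∂(sphereM (d + 1)))

/-- The Poisson kernel `P_B` for bosonic Laplacians in the unit ball. -/
def PB (m k : ℕ) (Z : Evec m → Evec m → ℝ) (x ζ ω ν : Evec m) : ℝ :=
  (cmk m k / 2) * ((1 - ‖x‖ ^ 2) / ‖x - ζ‖ ^ m) * Z (reflv (x - ζ) ω) ν

/-- The Poisson integral `P_B[h]` in the unit ball. -/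
def PBint (m k : ℕ) (Z : Evec m → Evec m → ℝ) (h : Evec m → Evec m → ℝ)
    (x ν : Evec m) : ℝ :=
  ∫ ζ, (∫ ω, PB m k Z x ζ ω ν * h ζ ω ∂(sphereM m)) ∂(sphereM m)

/-- Partial derivative in the first (`x`) variable. -/
def pd1 {m : ℕ} (i : Fin m) (f : Evec m → Evec m → ℝ) : Evec m → Evec m → ℝ :=
  fun x u => fderiv ℝ (fun x₁ => f x₁ u) x (EuclideanSpace.single i 1)

/-- Partial derivative in the second (`u`) variable. -/
def pd2 {m : ℕ} (i : Fin m) (f : Evec m → Evec m → ℝ) : Evec m → Evec m → ℝ :=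
  fun x u => fderiv ℝ (fun u₁ => f x u₁) u (EuclideanSpace.single i 1)

/-- The bosonic Laplacian `𝒟_k`. -/
def Dk (m k : ℕ) (f : Evec m → Evec m → ℝ) : Evec m → Evec m → ℝ := fun x u =>
  (∑ i : Fin m, pd1 i (pd1 i f) x u)
    - (4 / ((m : ℝ) + 2 * k - 2)) *
        ∑ i : Fin m, ∑ j : Fin m, u i * pd1 i (pd2 j (pd1 j f)) x u
    + (4 * ‖u‖ ^ 2 / (((m : ℝ) + 2 * k - 2) * ((m : ℝ) + 2 * k - 4))) *
        ∑ i : Fin m, ∑ j : Fin m, pd2 i (pd1 i (pd2 j (pd1 j f))) x u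

/-- `f ∈ C²(Ω×𝔹^m, ℋ_k)`: twice continuously differentiable on `Ω × 𝔹^m` and, for each
fixed `x ∈ Ω`, coinciding in the second variable with an element of `ℋ_k`. -/
def C2Hk (m k : ℕ) (Ω : Set (Evec m)) (f : Evec m → Evec m → ℝ) : Prop :=
  ContDiffOn ℝ 2 (fun q : Evec m × Evec m => f q.1 q.2) (Ω ×ˢ ball (0 : Evec m) 1) ∧
  ∀ x ∈ Ω, ∃ q, IsHk m k q ∧ ∀ u ∈ closedBall (0 : Evec m) 1, f x u = q u

/-- The `L^p` norm `(∫_{ℝ^{m-1}} ∫_{𝕊^{m-1}} |f(x',u)|^p dS(u) dx')^{1/p}` (`m = d+1`),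
valued in `ℝ≥0∞`. -/
def lpH (d : ℕ) (p : ℝ) (f : Evec d → Evec (d + 1) → ℝ) : ENNReal :=
  (∫⁻ x' : Evec d, ∫⁻ u, ENNReal.ofReal (|f x' u| ^ p) ∂(sphereM (d + 1))) ^ (1 / p)

/-- `f ∈ L^p(ℝ^{m-1}×𝔹^m, ℋ_k)` (`m = d+1`). -/
def MemLpH (d k : ℕ) (p : ℝ) (f : Evec d → Evec (d + 1) → ℝ) : Prop :=
  Measurable (fun q : Evec d × Evec (d + 1) => f q.1 q.2) ∧
  (∀ x' : Evec d, ∃ q, IsHk (d + 1) k q ∧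
    ∀ u ∈ closedBall (0 : Evec (d + 1)) 1, f x' u = q u) ∧
  lpH d p f < ⊤

/-- The `L^p` norm `(∫_{𝕊^{m-1}} ∫_{𝕊^{m-1}} |h(ζ,ω)|^p dS(ω) dS(ζ))^{1/p}`,
valued in `ℝ≥0∞`. -/
def lpS (m : ℕ) (p : ℝ) (h : Evec m → Evec m → ℝ) : ENNReal :=
  (∫⁻ ζ, ∫⁻ ω, ENNReal.ofReal (|h ζ ω| ^ p) ∂(sphereM m) ∂(sphereM m)) ^ (1 / p)

/-- `h ∈ L^p(𝕊^{m-1}×𝔹^m, ℋ_k)`. -/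
def MemLpS (m k : ℕ) (p : ℝ) (h : Evec m → Evec m → ℝ) : Prop :=
  Measurable (fun q : Evec m × Evec m => h q.1 q.2) ∧
  (∀ ζ : Evec m, ‖ζ‖ = 1 → ∃ q, IsHk m k q ∧
    ∀ ω ∈ closedBall (0 : Evec m) 1, h ζ ω = q ω) ∧
  lpS m p h < ⊤

/-- Iterated partial derivative `D_x^α` in the first variable, for a multi-index `α ∈ ℕ^m`. -/
def Dx {m : ℕ} (α : Fin m → ℕ) (f : Evec m → Evec m → ℝ) : Evec m → Evec m → ℝ :=
  (List.finRange m).foldr (fun i g => (pd1 i)^[α i] g) f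

/-- Iterated partial derivative `D_ν^β` in the second variable, for a multi-index `β ∈ ℕ^m`. -/
def Dv {m : ℕ} (β : Fin m → ℕ) (f : Evec m → Evec m → ℝ) : Evec m → Evec m → ℝ :=
  (List.finRange m).foldr (fun i g => (pd2 i)^[β i] g) f

/-!
Substituting `t' = x' - y s`, and moving the reflection from the first to the second argument of
`Z` by rotation invariance, turns the Poisson integral into
`P_H[f]((x', y), v) = c_{m,k} ∫ f(x' - y s, R_{(s,1)} v) (1 + |s|²)^(-m/2) ds`,
an average of translates of `f` against a finite measure. The total mass is one on `ℋ_k`: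
`c_{m,k} ∫ q(R_{(s,1)} v) (1 + |s|²)^(-m/2) ds = q(v)`. To see this, expand `q(v - t a)` in powers
of `t` with `a = (s, 1)`. In conical coordinates `x = t (s, 1)` each term becomes a Gaussian
integral over `ℝ^m` of `⟨v, x⟩^j` times a harmonic polynomial of degree `j`, which is evaluated by
integrating by parts `j` times; the resulting sum is a terminating `₂F₁` at `1`, known by Gauss's
theorem. Therefore `P_H[f] - f` is an average of the differences
`f(x' - y s, R_{(s,1)} v) - f(x', R_{(s,1)} v)`. As reflections preserve the sphere measure,
Jensen's inequality bounds its `L^p` norm by an average of the `L^p` moduli of continuity of `f`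
at `y s`, which tends to zero by continuity of translations in `L^p` and dominated convergence.
-/

section Polynomials

open MvPolynomial

variable {σ R : Type*}

section CommSemiring

variable [CommSemiring R]

theorem aeval_smul_of_isHomogeneous {A : Type*} [CommSemiring A] [Algebra R A] {n : ℕ}
    {P : MvPolynomial σ R} (hP : P.IsHomogeneous n) (c : A) (x : σ → A) :
    aeval (c • x) P = c ^ n * aeval x P := by
  rw [aeval_def, aeval_def, eval₂_eq, eval₂_eq, Finset.mul_sum]
  refine Finset.sum_congr rfl fun e he => ?_
  have hdeg : ∑ i ∈ e.support, e i = n := by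
    simpa [Finsupp.weight_apply, Finsupp.sum] using hP (mem_support_iff.mp he)
  simp only [Pi.smul_apply, smul_eq_mul, mul_pow, Finset.prod_mul_distrib,
    Finset.prod_pow_eq_pow_sum, hdeg]
  exact mul_left_comm _ _ _

theorem eval_smul_of_isHomogeneous {n : ℕ} {P : MvPolynomial σ R} (hP : P.IsHomogeneous n)
    (c : R) (x : σ → R) : eval (c • x) P = c ^ n * eval x P := by
  simpa only [aeval_eq_eval] using aeval_smul_of_isHomogeneous hP c x

theorem aeval_smul_eq_sum_homogeneousComponent {A : Type*} [CommSemiring A] [Algebra R A]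
    {N : ℕ} {P : MvPolynomial σ R} (hN : P.totalDegree < N) (c : A) (x : σ → A) :
    aeval (c • x) P = ∑ j ∈ Finset.range N, c ^ j * aeval x (homogeneousComponent j P) := by
  have hP : ∑ j ∈ Finset.range N, homogeneousComponent j P = P := by
    conv_rhs => rw [← sum_homogeneousComponent P]
    refine (Finset.sum_subset (Finset.range_subset_range.mpr hN) fun j _ hj => ?_).symm
    exact homogeneousComponent_eq_zero _ _ (by simpa using hj)
  conv_lhs => rw [← hP, map_sum]
  exact Finset.sum_congr rfl fun j _ =>
    aeval_smul_of_isHomogeneous (homogeneousComponent_isHomogeneous j P) c x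

theorem aeval_polynomialC (x : σ → R) (P : MvPolynomial σ R) :
    aeval (fun i => Polynomial.C (x i)) P = Polynomial.C (eval x P) :=
  aeval_algebraMap_apply (Polynomial R) x P

theorem eval_homogeneousComponent_eq_coeff (j : ℕ) (P : MvPolynomial σ R) (x : σ → R) :
    eval x (homogeneousComponent j P)
      = (aeval (fun i => Polynomial.C (x i) * Polynomial.X) P).coeff j := by
  have hx : (fun i => Polynomial.C (x i) * Polynomial.X)
      = (Polynomial.X : Polynomial R) • fun i => Polynomial.C (x i) := by
    funext i
    exact mul_comm _ _
  rw [hx, aeval_smul_eq_sum_homogeneousComponent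
    (Nat.lt_add_right j (Nat.lt_succ_self P.totalDegree))]
  simp only [aeval_polynomialC, Polynomial.finsetSum_coeff, mul_comm (Polynomial.X ^ _),
    Polynomial.coeff_C_mul_X_pow, Finset.sum_ite_eq, Finset.mem_range]
  split_ifs with h
  · rfl
  · rw [homogeneousComponent_eq_zero _ _ (by omega), map_zero]

theorem pderiv_homogeneousComponent_succ (i : σ) (n : ℕ) (P : MvPolynomial σ R) :
    pderiv i (homogeneousComponent (n + 1) P) = homogeneousComponent n (pderiv i P) := by
  have hterm : ∀ j, homogeneousComponent n (pderiv i (homogeneousComponent j P))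
      = if j = n + 1 then pderiv i (homogeneousComponent j P) else 0 := by
    rintro (_ | j)
    · simp
    · rw [homogeneousComponent_of_mem
        ((homogeneousComponent_isHomogeneous (j + 1) P).pderiv (i := i))]
      simp [eq_comm]
  conv_rhs => rw [← sum_homogeneousComponent P]
  rw [map_sum, map_sum]
  simp only [hterm, Finset.sum_ite_eq', Finset.mem_range]
  split_ifs with hn
  · rfl
  · rw [homogeneousComponent_eq_zero _ _ (by omega), map_zero]

/-- Translation of polynomials by a vector:
`polyTranslate v P` is the polynomial `x ↦ P (v + x)`. -/
def polyTranslate (v : σ → R) : MvPolynomial σ R →ₐ[R] MvPolynomial σ R :=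
  aeval fun i => C (v i) + X i

theorem aeval_polyTranslate {A : Type*} [CommSemiring A] [Algebra R A] (v : σ → R) (x : σ → A)
    (P : MvPolynomial σ R) :
    aeval x (polyTranslate v P) = aeval (fun i => algebraMap R A (v i) + x i) P := by
  rw [polyTranslate, comp_aeval_apply]
  simp

theorem eval_polyTranslate (v x : σ → R) (P : MvPolynomial σ R) :
    eval x (polyTranslate v P) = eval (v + x) P :=
  aeval_polyTranslate v x P

theorem totalDegree_polyTranslate_le (v : σ → R) (P : MvPolynomial σ R) :
    (polyTranslate v P).totalDegree ≤ P.totalDegree := by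
  have hlin : ∀ i, (C (v i) + X i : MvPolynomial σ R).totalDegree ≤ 1 := fun i =>
    (totalDegree_add _ _).trans (by simpa using (isHomogeneous_X R i).totalDegree_le)
  rw [polyTranslate, aeval_def, eval₂_eq]
  refine totalDegree_finsetSum_le fun e he => ?_
  calc (algebraMap R (MvPolynomial σ R) (coeff e P) *
        ∏ i ∈ e.support, (C (v i) + X i) ^ e i).totalDegree
      ≤ 0 + ∑ i ∈ e.support, ((C (v i) + X i : MvPolynomial σ R) ^ e i).totalDegree :=
        (totalDegree_mul _ _).trans
          (add_le_add (totalDegree_C _).le (totalDegree_finsetProd _ _))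
    _ ≤ ∑ i ∈ e.support, e i * 1 := by
        rw [zero_add]
        exact Finset.sum_le_sum fun i _ =>
          (totalDegree_pow _ _).trans (Nat.mul_le_mul_left _ (hlin i))
    _ ≤ P.totalDegree := by simpa [Finsupp.sum] using le_totalDegree he

theorem pderiv_polyTranslate (v : σ → R) (i : σ) (P : MvPolynomial σ R) :
    pderiv i (polyTranslate v P) = polyTranslate v (pderiv i P) := by
  induction P using MvPolynomial.induction_on with
  | C a => simp [polyTranslate]
  | add P Q hP hQ => simp only [map_add, hP, hQ]
  | mul_X P j hP =>
    have hX : pderiv i (polyTranslate v (X j)) = polyTranslate v (pderiv i (X j)) := by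
      classical
      simp only [polyTranslate, aeval_X, map_add, pderiv_C, zero_add, pderiv_X, Pi.single_apply]
      split_ifs <;> simp
    simp only [map_mul, map_add, Derivation.leibniz, smul_eq_mul, hP, hX]

theorem eval_homogeneousComponent_polyTranslate_self {n : ℕ} {P : MvPolynomial σ R}
    (hP : P.IsHomogeneous n) (v : σ → R) (j : ℕ) :
    eval v (homogeneousComponent j (polyTranslate v P)) = n.choose j * eval v P := by
  have hv : (fun i => Polynomial.C (v i) + Polynomial.C (v i) * Polynomial.X)
      = (1 + Polynomial.X : Polynomial R) • fun i => Polynomial.C (v i) := by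
    funext i
    simp only [Pi.smul_apply, smul_eq_mul]
    ring
  rw [eval_homogeneousComponent_eq_coeff, aeval_polyTranslate]
  simp only [Polynomial.algebraMap_eq]
  rw [hv, aeval_smul_of_isHomogeneous hP, aeval_polynomialC,
    Polynomial.coeff_mul_C, Polynomial.coeff_one_add_X_pow]

/-- The Laplacian `∑ ∂ᵢ²` acting on formal polynomials. -/
def polyLaplacian [Fintype σ] : MvPolynomial σ R →ₗ[R] MvPolynomial σ R :=
  ∑ i, (pderiv i).toLinearMap ∘ₗ (pderiv i).toLinearMap

theorem polyLaplacian_apply [Fintype σ] (P : MvPolynomial σ R) :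
    polyLaplacian P = ∑ i, pderiv i (pderiv i P) := by
  simp [polyLaplacian]

theorem polyLaplacian_polyTranslate [Fintype σ] (v : σ → R) (P : MvPolynomial σ R) :
    polyLaplacian (polyTranslate v P) = polyTranslate v (polyLaplacian P) := by
  simp only [polyLaplacian_apply, pderiv_polyTranslate, map_sum]

theorem polyLaplacian_homogeneousComponent_eq_zero [Fintype σ] {P : MvPolynomial σ R}
    (hP : polyLaplacian P = 0) (n : ℕ) : polyLaplacian (homogeneousComponent n P) = 0 := by
  rcases n with _ | _ | n
  · simp [polyLaplacian_apply]
  · simp [polyLaplacian_apply, pderiv_homogeneousComponent_succ]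
  · simp only [polyLaplacian_apply, pderiv_homogeneousComponent_succ] at hP ⊢
    rw [← map_sum, hP, map_zero]

/-- The directional derivative `∑ vᵢ ∂ᵢ` acting on formal polynomials. -/
def dirDeriv [Fintype σ] (v : σ → R) : MvPolynomial σ R →ₗ[R] MvPolynomial σ R :=
  ∑ i, v i • (pderiv i).toLinearMap

theorem dirDeriv_apply [Fintype σ] (v : σ → R) (P : MvPolynomial σ R) :
    dirDeriv v P = ∑ i, v i • pderiv i P := by
  simp [dirDeriv]

theorem isHomogeneous_dirDeriv [Fintype σ] (v : σ → R) {n : ℕ} {P : MvPolynomial σ R}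
    (hP : P.IsHomogeneous n) : (dirDeriv v P).IsHomogeneous (n - 1) := by
  rw [dirDeriv_apply]
  refine IsHomogeneous.sum _ _ _ fun i _ => ?_
  rw [smul_eq_C_mul, ← zero_add (n - 1)]
  exact (isHomogeneous_C σ (v i)).mul hP.pderiv

theorem eval_dirDeriv_self [Fintype σ] (v : σ → R) {n : ℕ} {P : MvPolynomial σ R}
    (hP : P.IsHomogeneous n) : eval v (dirDeriv v P) = n * eval v P := by
  simpa [dirDeriv_apply, smul_eval] using congrArg (eval v) hP.sum_X_mul_pderiv

/-- The linear form `∑ vᵢ Xᵢ`. -/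
def linearForm [Fintype σ] (v : σ → R) : MvPolynomial σ R :=
  ∑ i, v i • X i

theorem isHomogeneous_linearForm [Fintype σ] (v : σ → R) : (linearForm v).IsHomogeneous 1 := by
  refine IsHomogeneous.sum _ _ _ fun i _ => ?_
  rw [smul_eq_C_mul, ← zero_add 1]
  exact (isHomogeneous_C σ (v i)).mul (isHomogeneous_X R i)

theorem isHomogeneous_linearForm_pow_mul [Fintype σ] (v : σ → R) {n : ℕ} {P : MvPolynomial σ R}
    (hP : P.IsHomogeneous n) : (linearForm v ^ n * P).IsHomogeneous (2 * n) := by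
  simpa [two_mul] using ((isHomogeneous_linearForm v).pow n).mul hP

theorem pderiv_linearForm [Fintype σ] (v : σ → R) (i : σ) :
    pderiv i (linearForm v) = C (v i) := by
  classical
  simp [linearForm, pderiv_X, Pi.single_apply, smul_eq_C_mul]

theorem sum_pderiv_linearForm_pow_mul_pderiv [Fintype σ] (v : σ → R) (n : ℕ)
    (P : MvPolynomial σ R) :
    ∑ i, pderiv i (linearForm v ^ (n + 1) * pderiv i P)
      = linearForm v ^ (n + 1) * polyLaplacian P
        + ((n : R) + 1) • (linearForm v ^ n * dirDeriv v P) := by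
  rw [polyLaplacian_apply, dirDeriv_apply, Finset.mul_sum, Finset.mul_sum, Finset.smul_sum,
    ← Finset.sum_add_distrib]
  refine Finset.sum_congr rfl fun i _ => ?_
  rw [pderiv_mul, pderiv_pow, pderiv_linearForm]
  simp only [smul_eq_C_mul, map_add, map_natCast, map_one, Nat.add_sub_cancel]
  push_cast
  ring

end CommSemiring

section CommRing

variable [CommRing R]

theorem pderiv_pderiv_comm (i j : σ) (P : MvPolynomial σ R) :
    pderiv i (pderiv j P) = pderiv j (pderiv i P) := by
  classical
  have hcomm : ⁅pderiv (R := R) i, pderiv (R := R) j⁆ = 0 := by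
    refine MvPolynomial.derivation_ext fun n => ?_
    simp only [Derivation.commutator_apply, pderiv_X, Pi.single_apply]
    split_ifs <;> simp
  simpa [Derivation.commutator_apply, sub_eq_zero] using DFunLike.congr_fun hcomm P

theorem polyLaplacian_dirDeriv [Fintype σ] (v : σ → R) (P : MvPolynomial σ R) :
    polyLaplacian (dirDeriv v P) = dirDeriv v (polyLaplacian P) := by
  simp only [polyLaplacian_apply, dirDeriv_apply, map_sum, map_smul, Finset.smul_sum]
  rw [Finset.sum_comm]
  simp only [pderiv_pderiv_comm _ _ P, pderiv_pderiv_comm _ _ (pderiv _ P)]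

theorem isHomogeneous_of_forall_eval_smul [IsDomain R] [Infinite R] {n : ℕ}
    {P : MvPolynomial σ R} (h : ∀ (c : R) (x : σ → R), eval (c • x) P = c ^ n * eval x P) :
    P.IsHomogeneous n := by
  suffices hP : homogeneousComponent n P = P from hP ▸ homogeneousComponent_isHomogeneous n P
  refine MvPolynomial.funext fun x => ?_
  have hpoly : aeval (fun i => Polynomial.C (x i) * Polynomial.X) P
      = Polynomial.C (eval x P) * Polynomial.X ^ n := by
    refine Polynomial.funext fun c => ?_
    have hc : (fun i => Polynomial.aeval c (Polynomial.C (x i) * Polynomial.X)) = c • x := by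
      funext i
      rw [map_mul, Polynomial.aeval_C, Polynomial.aeval_X]
      exact mul_comm _ _
    rw [← Polynomial.coe_aeval_eq_eval, comp_aeval_apply, hc, aeval_eq_eval]
    simp only [map_mul, map_pow, Polynomial.aeval_C, Polynomial.aeval_X]
    exact (h c x).trans (mul_comm _ _)
  rw [eval_homogeneousComponent_eq_coeff, hpoly, Polynomial.coeff_C_mul_X_pow, if_pos rfl]

end CommRing

end Polynomials

section PolynomialFunctions

open MvPolynomial

theorem hasFDerivAt_eval {ι : Type*} [Fintype ι] (P : MvPolynomial ι ℝ) (x : EuclideanSpace ℝ ι) :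
    HasFDerivAt (fun x : EuclideanSpace ℝ ι => eval x.ofLp P)
      (∑ i, eval x.ofLp (pderiv i P) • (EuclideanSpace.proj i : EuclideanSpace ℝ ι →L[ℝ] ℝ)) x := by
  classical
  induction P using MvPolynomial.induction_on with
  | C a => simpa using hasFDerivAt_const a x
  | add P Q hP hQ =>
    simp only [map_add, add_smul, Finset.sum_add_distrib]
    exact hP.add hQ
  | mul_X P j hP =>
    have hX := (EuclideanSpace.proj j : EuclideanSpace ℝ ι →L[ℝ] ℝ).hasFDerivAt (x := x)
    simp only [map_mul, eval_X]
    refine (hP.mul hX).congr_fderiv ?_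
    ext v
    simp [pderiv_X, Pi.single_apply, add_mul, Finset.sum_add_distrib, Finset.mul_sum, apply_ite,
      ite_mul, mul_assoc]

theorem fderiv_eval_single {ι : Type*} [Finite ι] [DecidableEq ι] (P : MvPolynomial ι ℝ)
    (x : EuclideanSpace ℝ ι) (i : ι) :
    fderiv ℝ (fun x : EuclideanSpace ℝ ι => eval x.ofLp P) x (EuclideanSpace.single i 1)
      = eval x.ofLp (pderiv i P) := by
  have := Fintype.ofFinite ι
  rw [(hasFDerivAt_eval P x).fderiv]
  simp [PiLp.single_apply]

theorem lapl_eval {m : ℕ} (P : MvPolynomial (Fin m) ℝ) (x : Evec m) :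
    lapl (fun x : Evec m => eval x.ofLp P) x = eval x.ofLp (polyLaplacian P) := by
  have hpdv : ∀ (i : Fin m) (P : MvPolynomial (Fin m) ℝ),
      pdv i (fun x : Evec m => eval x.ofLp P) = fun x => eval x.ofLp (pderiv i P) := fun i P =>
    funext fun x => fderiv_eval_single P x i
  simp only [lapl, polyLaplacian_apply, hpdv, map_sum]

theorem IsHk.exists_harmonic_polynomial {m k : ℕ} {q : Evec m → ℝ} (hq : IsHk m k q) :
    ∃ P : MvPolynomial (Fin m) ℝ, P.IsHomogeneous k ∧ polyLaplacian P = 0 ∧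
      ∀ x, q x = eval x.ofLp P := by
  obtain ⟨⟨P, hP⟩, hhom, hharm⟩ := hq
  refine ⟨P, isHomogeneous_of_forall_eval_smul fun c x => ?_, MvPolynomial.funext fun x => ?_, hP⟩
  · have := hhom c (WithLp.toLp 2 x)
    rwa [hP, hP] at this
  · have := hharm (WithLp.toLp 2 x)
    rwa [show q = fun x : Evec m => eval x.ofLp P from funext hP, lapl_eval] at this

end PolynomialFunctions

section GaussianIntegral

open MvPolynomial

variable {ι : Type*} [Fintype ι]

theorem integrable_eval_mul_exp_neg_norm_sq (P : MvPolynomial ι ℝ) :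
    Integrable (fun x : EuclideanSpace ℝ ι => eval x.ofLp P * Real.exp (-‖x‖ ^ 2)) := by
  have hpow : ∀ n : ℕ, Integrable (fun t : ℝ => t ^ n * Real.exp (-t ^ 2)) := fun n => by
    simpa using integrable_rpow_mul_exp_neg_mul_sq one_pos (s := n)
      (neg_one_lt_zero.trans_le n.cast_nonneg)
  have hmonomial : ∀ e : ι →₀ ℕ, Integrable
      (fun x : EuclideanSpace ℝ ι => (∏ i, x i ^ e i) * Real.exp (-‖x‖ ^ 2)) := fun e => by
    have h := (PiLp.volume_preserving_ofLp ι).integrable_comp_of_integrable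
      (Integrable.fintype_prod (μ := fun _ => volume) fun i => hpow (e i))
    refine h.congr (.of_forall fun x => ?_)
    simp [Finset.prod_mul_distrib, EuclideanSpace.norm_sq_eq, ← Real.exp_sum]
  simp only [eval_eq', Finset.sum_mul, mul_assoc]
  exact integrable_finsetSum _ fun e _ => (hmonomial e).const_mul (coeff e P)

/-- The Gaussian integral `∫ P(x) exp(-|x|²) dx` of a polynomial. -/
def gaussianIntegral : MvPolynomial ι ℝ →ₗ[ℝ] ℝ where
  toFun P := ∫ x : EuclideanSpace ℝ ι, eval x.ofLp P * Real.exp (-‖x‖ ^ 2)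
  map_add' P Q := by
    simp only [map_add, add_mul]
    exact integral_add (integrable_eval_mul_exp_neg_norm_sq P)
      (integrable_eval_mul_exp_neg_norm_sq Q)
  map_smul' c P := by
    simp only [smul_eval, mul_assoc, RingHom.id_apply, smul_eq_mul, integral_const_mul]

theorem gaussianIntegral_apply (P : MvPolynomial ι ℝ) :
    gaussianIntegral P = ∫ x : EuclideanSpace ℝ ι, eval x.ofLp P * Real.exp (-‖x‖ ^ 2) :=
  rfl

theorem gaussianIntegral_one :
    gaussianIntegral (1 : MvPolynomial ι ℝ) = Real.pi ^ ((Fintype.card ι : ℝ) / 2) := by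
  simpa [gaussianIntegral_apply] using
    GaussianFourier.integral_rexp_neg_mul_sq_norm (V := EuclideanSpace ℝ ι) one_pos

theorem hasFDerivAt_exp_neg_norm_sq {E : Type*} [NormedAddCommGroup E] [InnerProductSpace ℝ E]
    (x : E) :
    HasFDerivAt (fun x : E => Real.exp (-‖x‖ ^ 2))
      (-(2 * Real.exp (-‖x‖ ^ 2)) • innerSL ℝ x) x := by
  refine (hasStrictFDerivAt_norm_sq x).hasFDerivAt.neg.exp.congr_fderiv ?_
  ext v
  simp only [Pi.neg_apply, smul_neg, neg_apply, smul_apply, coe_innerSL_apply, nsmul_eq_mul,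
    Nat.cast_ofNat, smul_eq_mul, neg_smul, neg_inj]
  ring

theorem two_mul_gaussianIntegral_X_mul (i : ι) (P : MvPolynomial ι ℝ) :
    2 * gaussianIntegral (X i * P) = gaussianIntegral (pderiv i P) := by
  classical
  have hP : ∀ x : EuclideanSpace ℝ ι, fderiv ℝ (fun x : EuclideanSpace ℝ ι => eval x.ofLp P) x
      (EuclideanSpace.single i 1) = eval x.ofLp (pderiv i P) := fun x =>
    fderiv_eval_single P x i
  have hexp : ∀ x : EuclideanSpace ℝ ι, fderiv ℝ (fun x : EuclideanSpace ℝ ι =>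
      Real.exp (-‖x‖ ^ 2)) x (EuclideanSpace.single i 1) = -2 * (x i * Real.exp (-‖x‖ ^ 2)) :=
    fun x => by
      rw [(hasFDerivAt_exp_neg_norm_sq x).fderiv]
      simp only [neg_smul, neg_apply, smul_apply, coe_innerSL_apply,
        EuclideanSpace.inner_single_right, Real.ringHom_apply, one_mul, smul_eq_mul, neg_mul,
        neg_inj]
      ring
  have hX : ∀ x : EuclideanSpace ℝ ι, eval x.ofLp P * (-2 * (x i * Real.exp (-‖x‖ ^ 2)))
      = -2 * (eval x.ofLp (X i * P) * Real.exp (-‖x‖ ^ 2)) := fun x => by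
    rw [map_mul, eval_X]
    ring
  have hparts := integral_mul_fderiv_eq_neg_fderiv_mul_of_integrable
    (μ := (volume : Measure (EuclideanSpace ℝ ι))) (v := EuclideanSpace.single i 1)
    (by simpa only [hP] using integrable_eval_mul_exp_neg_norm_sq (pderiv i P))
    (by simpa only [hexp, hX] using (integrable_eval_mul_exp_neg_norm_sq (X i * P)).const_mul (-2))
    (integrable_eval_mul_exp_neg_norm_sq P)
    (fun x _ => (hasFDerivAt_eval P x).differentiableAt)
    (fun x _ => (hasFDerivAt_exp_neg_norm_sq x).differentiableAt)
  simp only [hP, hexp, hX, integral_const_mul] at hparts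
  rw [gaussianIntegral_apply, gaussianIntegral_apply]
  linarith

theorem two_mul_gaussianIntegral_linearForm_pow_mul (v : ι → ℝ) {n : ℕ} {P : MvPolynomial ι ℝ}
    (hP : P.IsHomogeneous (n + 1)) (hharm : polyLaplacian P = 0) :
    2 * gaussianIntegral (linearForm v ^ (n + 1) * P)
      = gaussianIntegral (linearForm v ^ n * dirDeriv v P) := by
  have heuler : ((n : ℝ) + 1) • (linearForm v ^ (n + 1) * P)
      = ∑ i, X i * (linearForm v ^ (n + 1) * pderiv i P) := by
    simp only [mul_left_comm (X _), ← Finset.mul_sum, hP.sum_X_mul_pderiv]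
    rw [← mul_smul_comm, ← Nat.cast_smul_eq_nsmul ℝ, Nat.cast_add_one]
  have hstep : ((n : ℝ) + 1) * (2 * gaussianIntegral (linearForm v ^ (n + 1) * P))
      = ((n : ℝ) + 1) * gaussianIntegral (linearForm v ^ n * dirDeriv v P) :=
    calc ((n : ℝ) + 1) * (2 * gaussianIntegral (linearForm v ^ (n + 1) * P))
        = 2 * gaussianIntegral (∑ i, X i * (linearForm v ^ (n + 1) * pderiv i P)) := by
          rw [← heuler, map_smul, smul_eq_mul, mul_left_comm]
      _ = gaussianIntegral (∑ i, pderiv i (linearForm v ^ (n + 1) * pderiv i P)) := by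
          simp only [map_sum, Finset.mul_sum, two_mul_gaussianIntegral_X_mul]
      _ = ((n : ℝ) + 1) * gaussianIntegral (linearForm v ^ n * dirDeriv v P) := by
          rw [sum_pderiv_linearForm_pow_mul_pderiv, hharm, mul_zero, zero_add, map_smul,
            smul_eq_mul]
  exact mul_left_cancel₀ n.cast_add_one_ne_zero hstep

theorem gaussianIntegral_linearForm_pow_mul (v : ι → ℝ) {n : ℕ} {P : MvPolynomial ι ℝ}
    (hP : P.IsHomogeneous n) (hharm : polyLaplacian P = 0) :
    gaussianIntegral (linearForm v ^ n * P)
      = n.factorial / 2 ^ n * Real.pi ^ ((Fintype.card ι : ℝ) / 2) * eval v P := by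
  induction n generalizing P with
  | zero =>
    rw [← totalDegree_zero_iff_isHomogeneous, totalDegree_eq_zero_iff_eq_C] at hP
    rw [hP, pow_zero, one_mul, ← mul_one (C _), ← smul_eq_C_mul, map_smul, gaussianIntegral_one]
    simp [mul_comm]
  | succ n ih =>
    have hstep := two_mul_gaussianIntegral_linearForm_pow_mul v hP hharm
    rw [ih (isHomogeneous_dirDeriv v hP) (by rw [polyLaplacian_dirDeriv, hharm, map_zero]),
      eval_dirDeriv_self v hP] at hstep
    rw [← mul_right_inj' two_ne_zero, hstep, Nat.factorial_succ, pow_succ]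
    push_cast
    field_simp

end GaussianIntegral

section UpperHalfSpace

variable {d : ℕ}

theorem upP_castSucc (s : Evec d) (t : ℝ) (i : Fin d) : upP d s t i.castSucc = s i := by
  simp [upP]

theorem upP_last (s : Evec d) (t : ℝ) : upP d s t (Fin.last d) = t := by
  simp [upP]

theorem norm_upP_sq (s : Evec d) (t : ℝ) : ‖upP d s t‖ ^ 2 = ‖s‖ ^ 2 + t ^ 2 := by
  simp [EuclideanSpace.norm_sq_eq, Fin.sum_univ_castSucc, upP_castSucc, upP_last]

theorem upP_smul (c : ℝ) (s : Evec d) (t : ℝ) : upP d (c • s) (c * t) = c • upP d s t := by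
  ext i
  cases i using Fin.lastCases <;> simp [upP_castSucc, upP_last]

theorem upP_sub (s s' : Evec d) (t t' : ℝ) :
    upP d s t - upP d s' t' = upP d (s - s') (t - t') := by
  ext i
  cases i using Fin.lastCases <;> simp [upP_castSucc, upP_last]

theorem continuous_upP_one : Continuous fun s : Evec d => upP d s 1 := by
  refine (EuclideanSpace.equiv (Fin (d + 1)) ℝ).symm.continuous.comp (continuous_pi fun i => ?_)
  cases i using Fin.lastCases with
  | last => simp only [Fin.snoc_last, continuous_const]
  | cast i =>
    simp only [Fin.snoc_castSucc]
    exact (EuclideanSpace.proj i : Evec d →L[ℝ] ℝ).continuous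

theorem norm_upP_one_pos (s : Evec d) : 0 < ‖upP d s 1‖ := by
  have hsq := norm_upP_sq s 1
  exact (norm_nonneg _).lt_of_ne fun h => by nlinarith [sq_nonneg ‖s‖]

theorem measurePreserving_upP : MeasurePreserving fun z : Evec d × ℝ => upP d z.1 z.2 := by
  have hsplit := (volume_preserving_piFinSuccAbove (fun _ : Fin (d + 1) => ℝ) (Fin.last d)).symm
  have hfst := (PiLp.volume_preserving_ofLp (Fin d)).prod
    (MeasurePreserving.id (volume : Measure ℝ))
  have hcomp : (fun z : Evec d × ℝ => upP d z.1 z.2) = WithLp.toLp 2 ∘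
      (MeasurableEquiv.piFinSuccAbove (fun _ => ℝ) (Fin.last d)).symm ∘
      Prod.swap ∘ Prod.map WithLp.ofLp id := by
    ext z i
    cases i using Fin.lastCases <;>
      simp [upP_castSucc, upP_last, MeasurableEquiv.piFinSuccAbove]
  rw [hcomp]
  exact (PiLp.volume_preserving_toLp (Fin (d + 1))).comp
    (hsplit.comp (Measure.measurePreserving_swap.comp hfst))

end UpperHalfSpace

section ConicalCoordinates

theorem measurePreserving_smul_fst {E : Type*} [NormedAddCommGroup E] [NormedSpace ℝ E]
    [FiniteDimensional ℝ E] [MeasurableSpace E] [BorelSpace E] (μ : Measure E)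
    [μ.IsAddHaarMeasure] :
    MeasurePreserving (fun z : E × ℝ => (z.2 • z.1, z.2))
      ((μ.prod volume).withDensity fun z => (‖z.2‖₊ ^ Module.finrank ℝ E : NNReal))
      (μ.prod volume) := by
  have hmeas : Measurable fun z : E × ℝ => (z.2 • z.1, z.2) := by fun_prop
  refine ⟨hmeas, Measure.ext fun B hB => ?_⟩
  rw [Measure.map_apply hmeas hB, withDensity_apply _ (hmeas hB), ← lintegral_indicator (hmeas hB),
    lintegral_prod_symm' _ ((Measurable.indicator (by fun_prop) (hmeas hB))),
    Measure.prod_apply_symm hB]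
  refine lintegral_congr_ae ?_
  filter_upwards [Measure.ae_ne volume (0 : ℝ)] with t ht
  have hslice : MeasurableSet ((t • ·) ⁻¹' ((fun x : E => (x, t)) ⁻¹' B)) :=
    measurable_const_smul t (measurable_prodMk_right hB)
  calc ∫⁻ x, _ ∂μ
      = ∫⁻ x, ((t • ·) ⁻¹' ((fun x : E => (x, t)) ⁻¹' B)).indicator
          (fun _ => ‖t ^ Module.finrank ℝ E‖ₑ) x ∂μ := by
        simp only [enorm_eq_nnnorm, nnnorm_pow]
        rfl
    _ = ‖t ^ Module.finrank ℝ E‖ₑ *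
          (‖(t ^ Module.finrank ℝ E)⁻¹‖ₑ * μ ((fun x => (x, t)) ⁻¹' B)) := by
        rw [lintegral_indicator_const hslice, Measure.addHaar_preimage_smul μ ht,
          ← Real.enorm_eq_ofReal_abs]
    _ = μ ((fun x => (x, t)) ⁻¹' B) := by
        rw [← mul_assoc, ← enorm_mul, mul_inv_cancel₀ (pow_ne_zero _ ht), enorm_one, one_mul]

theorem measurePreserving_smul_upP_one (d : ℕ) :
    MeasurePreserving (fun z : Evec d × ℝ => z.2 • upP d z.1 1)
      ((volume.prod volume).withDensity fun z => (‖z.2‖₊ ^ d : NNReal)) volume := by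
  have h := measurePreserving_upP.comp (measurePreserving_smul_fst (volume : Measure (Evec d)))
  have hupP : (fun z : Evec d × ℝ => z.2 • upP d z.1 1) = fun z => upP d (z.2 • z.1) z.2 :=
    funext fun z => by rw [← upP_smul, mul_one]
  rw [finrank_euclideanSpace_fin] at h
  rwa [hupP]

theorem integral_abs_pow_mul_exp (n : ℕ) {r : ℝ} (hr : 0 < r) :
    ∫ t : ℝ, |t| ^ n * Real.exp (-(r * t) ^ 2) = Real.Gamma ((n + 1) / 2) / r ^ (n + 1) := by
  have habs := integral_comp_abs (f := fun t : ℝ => t ^ n * Real.exp (-(r * t) ^ 2))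
  have hGamma := integral_rpow_mul_exp_neg_mul_rpow (p := 2) (q := n) two_pos
    (neg_one_lt_zero.trans_le n.cast_nonneg) (pow_pos hr 2)
  simp only [mul_pow, sq_abs, ← neg_mul] at habs ⊢
  simp only [Real.rpow_natCast, Real.rpow_ofNat] at hGamma
  have hr2 : (r ^ 2) ^ (-((n : ℝ) + 1) / 2) = (r ^ (n + 1))⁻¹ := by
    rw [← Real.rpow_natCast, ← Real.rpow_mul hr.le, ← Real.rpow_natCast r (n + 1),
      ← Real.rpow_neg hr.le]
    congr 1
    push_cast
    ring
  rw [habs, hGamma, hr2]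
  ring

/-- The density `(1 + |s|²)^(-(d+1)/2)` on `ℝ^d`: the half-space Poisson kernel at height one,
without its normalizing constant. -/
def poissonWeight (d : ℕ) (s : Evec d) : NNReal :=
  (‖upP d s 1‖₊ ^ (d + 1))⁻¹

/-- The measure on `ℝ^d` with density `poissonWeight`. -/
def poissonMeasure (d : ℕ) : Measure (Evec d) :=
  volume.withDensity fun s => poissonWeight d s

theorem measurable_poissonWeight (d : ℕ) : Measurable (poissonWeight d) :=
  (continuous_upP_one.measurable.nnnorm.pow_const _).inv

variable {d j : ℕ} {P : MvPolynomial (Fin (d + 1)) ℝ}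

open MvPolynomial

theorem eval_smul_mul_exp_eq (hP : P.IsHomogeneous (2 * j)) (a : Evec (d + 1)) (t : ℝ) :
    ‖t‖₊ ^ d • (eval (t • a).ofLp P * Real.exp (-‖t • a‖ ^ 2))
      = eval a.ofLp P * (|t| ^ (d + 2 * j) * Real.exp (-(‖a‖ * t) ^ 2)) := by
  rw [NNReal.smul_def, WithLp.ofLp_smul, eval_smul_of_isHomogeneous hP, norm_smul,
    Real.norm_eq_abs, mul_pow, sq_abs, mul_pow, mul_comm (t ^ 2), pow_mul t, ← sq_abs t,
    ← pow_mul, pow_add]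
  simp only [NNReal.coe_pow, coe_nnnorm, Real.norm_eq_abs, sq_abs, smul_eq_mul]
  ring

theorem integral_eval_mul_abs_pow_mul_exp (s : Evec d) :
    ∫ t, eval (upP d s 1).ofLp P * (|t| ^ (d + 2 * j) * Real.exp (-(‖upP d s 1‖ * t) ^ 2))
      = Real.Gamma ((d + 1) / 2 + j) *
        (poissonWeight d s • (eval (upP d s 1).ofLp P / ‖upP d s 1‖ ^ (2 * j))) := by
  rw [integral_const_mul, integral_abs_pow_mul_exp _ (norm_upP_one_pos s), poissonWeight,
    NNReal.smul_def, show ((d + 2 * j : ℕ) + 1 : ℝ) / 2 = (d + 1) / 2 + j by push_cast; ring,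
    add_right_comm, pow_add]
  push_cast
  rw [smul_eq_mul]
  field_simp

theorem integrable_eval_mul_abs_pow_mul_exp (hP : P.IsHomogeneous (2 * j)) :
    Integrable (fun z : Evec d × ℝ => eval (upP d z.1 1).ofLp P *
      (|z.2| ^ (d + 2 * j) * Real.exp (-(‖upP d z.1 1‖ * z.2) ^ 2))) (volume.prod volume) := by
  have h := (measurePreserving_smul_upP_one d).integrable_comp_of_integrable
    (integrable_eval_mul_exp_neg_norm_sq P)
  rw [integrable_withDensity_iff_integrable_smul (by fun_prop)] at h
  simpa only [Function.comp_apply, eval_smul_mul_exp_eq hP] using h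

theorem integrable_eval_div_norm_pow (hP : P.IsHomogeneous (2 * j)) :
    Integrable (fun s => eval (upP d s 1).ofLp P / ‖upP d s 1‖ ^ (2 * j)) (poissonMeasure d) := by
  have hΓ : Real.Gamma (((d : ℝ) + 1) / 2 + j) ≠ 0 := (Real.Gamma_pos_of_pos (by positivity)).ne'
  have h := (integrable_eval_mul_abs_pow_mul_exp hP).integral_prod_left
  simp only [integral_eval_mul_abs_pow_mul_exp] at h
  rw [poissonMeasure, integrable_withDensity_iff_integrable_smul (measurable_poissonWeight d)]
  exact (integrable_const_mul_iff (isUnit_iff_ne_zero.mpr hΓ) _).mp h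

theorem gaussianIntegral_eq_Gamma_mul_integral (hP : P.IsHomogeneous (2 * j)) :
    gaussianIntegral P = Real.Gamma ((d + 1) / 2 + j) *
      ∫ s, eval (upP d s 1).ofLp P / ‖upP d s 1‖ ^ (2 * j) ∂poissonMeasure d := by
  have hmp := measurePreserving_smul_upP_one d
  have hF := (integrable_eval_mul_exp_neg_norm_sq P).aestronglyMeasurable
  rw [gaussianIntegral_apply, ← hmp.map_eq, integral_map hmp.measurable.aemeasurable
    (hmp.map_eq.symm ▸ hF), integral_withDensity_eq_integral_smul (by fun_prop)]
  simp only [eval_smul_mul_exp_eq hP]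
  rw [integral_prod _ (integrable_eval_mul_abs_pow_mul_exp hP), poissonMeasure,
    integral_withDensity_eq_integral_smul (measurable_poissonWeight d), ← integral_const_mul]
  simp only [integral_eval_mul_abs_pow_mul_exp]

instance (d : ℕ) : IsFiniteMeasure (poissonMeasure d) := by
  have h := integrable_eval_div_norm_pow (d := d) (j := 0) (isHomogeneous_one (Fin (d + 1)) ℝ)
  simpa [integrable_const_iff_isFiniteMeasure] using h

end ConicalCoordinates

section TotalMass

open MvPolynomial

theorem omegaS_eq_div_Gamma {m : ℕ} (hm : 0 < m) :
    omegaS m = 2 * Real.pi ^ ((m : ℝ) / 2) / Real.Gamma ((m : ℝ) / 2) := by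
  have : Nonempty (Fin m) := ⟨⟨0, hm⟩⟩
  have hsphere : sphereM m Set.univ = (volume : Measure (Evec m)).toSphere Set.univ := by
    rw [sphereM, Measure.map_apply measurable_subtype_coe MeasurableSet.univ, Set.preimage_univ]
  have hm2 : (0 : ℝ) < m / 2 := by positivity
  rw [omegaS, hsphere, Measure.toSphere_apply_univ, EuclideanSpace.volume_ball]
  simp only [finrank_euclideanSpace, Fintype.card_fin, ENNReal.toReal_mul, ENNReal.toReal_natCast,
    ENNReal.ofReal_one, one_pow, one_mul]
  rw [ENNReal.toReal_ofReal (by positivity), Real.Gamma_add_one hm2.ne', Real.sqrt_eq_rpow,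
    ← Real.rpow_natCast, ← Real.rpow_mul Real.pi_pos.le, one_div_mul_eq_div]
  field_simp

-- Gauss's summation formula for `₂F₁(-k, 1; c; 1)`, which terminates.
theorem sum_descFactorial_div_Gamma {c : ℝ} (hc : 0 < c) (k : ℕ) :
    (c - 1 + k) * ∑ j ∈ Finset.range (k + 1),
        (-1 : ℝ) ^ j * k.descFactorial j / Real.Gamma (c + j)
      = (c - 1) / Real.Gamma c := by
  set t : ℕ → ℝ := fun j => (-1 : ℝ) ^ j * k.descFactorial j / Real.Gamma (c + j) with ht
  have htel : ∀ j ∈ Finset.range (k + 1),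
      (c - 1 + k) * t j = (c - 1 + j) * t j - (c - 1 + (j + 1 : ℕ)) * t (j + 1) := by
    intro j hj
    have hjk : j ≤ k := Finset.mem_range_succ_iff.mp hj
    have hcj : 0 < c + j := by positivity
    simp only [ht]
    rw [Nat.cast_succ, ← add_assoc c, Real.Gamma_add_one hcj.ne', Nat.descFactorial_succ,
      Nat.cast_mul, Nat.cast_sub hjk, pow_succ]
    field_simp
    ring
  rw [Finset.mul_sum, Finset.sum_congr rfl htel,
    Finset.sum_range_sub' (fun j : ℕ => (c - 1 + j) * t j) (k + 1)]
  simp only [ht, Nat.cast_zero, add_zero, pow_zero, Nat.descFactorial_zero, Nat.cast_one, mul_one,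
    one_div, Nat.cast_add, sub_add_add_cancel, Nat.descFactorial_succ, tsub_self, zero_mul,
    mul_zero, zero_div, sub_zero]
  ring

theorem eval_linearForm {m : ℕ} (v a : Evec m) : eval a.ofLp (linearForm v.ofLp) = ⟪a, v⟫ := by
  simp [linearForm, smul_eval, PiLp.inner_apply]

theorem eval_reflv {m k : ℕ} {P : MvPolynomial (Fin m) ℝ} (hP : P.IsHomogeneous k)
    (a v : Evec m) :
    eval (reflv a v).ofLp P = ∑ j ∈ Finset.range (k + 1), (-2) ^ j *
      (eval a.ofLp (linearForm v.ofLp ^ j * homogeneousComponent j (polyTranslate v.ofLp P))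
        / ‖a‖ ^ (2 * j)) := by
  have hrefl : (reflv a v).ofLp = v.ofLp + (-2 * ⟪a, v⟫ / ‖a‖ ^ 2) • a.ofLp := by
    rw [reflv, sub_eq_add_neg, ← neg_smul, neg_mul, neg_div]
    rfl
  have hdeg : (polyTranslate v.ofLp P).totalDegree < k + 1 :=
    Nat.lt_succ_of_le ((totalDegree_polyTranslate_le _ P).trans hP.totalDegree_le)
  rw [hrefl, ← eval_polyTranslate, ← aeval_eq_eval, aeval_smul_eq_sum_homogeneousComponent hdeg]
  refine Finset.sum_congr rfl fun j _ => ?_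
  rw [aeval_eq_eval, map_mul, map_pow, eval_linearForm, div_pow, mul_pow, pow_mul]
  ring

variable {d : ℕ}

theorem integral_eval_linearForm_pow_mul_div_norm_pow (v : Fin (d + 1) → ℝ) {j : ℕ}
    {H : MvPolynomial (Fin (d + 1)) ℝ} (hH : H.IsHomogeneous j) (hharm : polyLaplacian H = 0) :
    ∫ s, eval (upP d s 1).ofLp (linearForm v ^ j * H) / ‖upP d s 1‖ ^ (2 * j) ∂poissonMeasure d
      = j.factorial / 2 ^ j * Real.pi ^ (((d : ℝ) + 1) / 2) * eval v H
        / Real.Gamma ((d + 1) / 2 + j) := by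
  have hΓ : Real.Gamma (((d : ℝ) + 1) / 2 + j) ≠ 0 := (Real.Gamma_pos_of_pos (by positivity)).ne'
  rw [eq_div_iff hΓ, mul_comm, ← gaussianIntegral_eq_Gamma_mul_integral
    (isHomogeneous_linearForm_pow_mul v hH),
    gaussianIntegral_linearForm_pow_mul v hH hharm, Fintype.card_fin, Nat.cast_succ]

theorem IsHk.integral_comp_reflv_upP {k : ℕ} {q : Evec (d + 1) → ℝ} (hq : IsHk (d + 1) k q)
    (v : Evec (d + 1)) :
    ∫ s, q (reflv (upP d s 1) v) ∂poissonMeasure d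
      = Real.pi ^ (((d : ℝ) + 1) / 2) * q v * ∑ j ∈ Finset.range (k + 1),
        (-1 : ℝ) ^ j * k.descFactorial j / Real.Gamma ((d + 1) / 2 + j) := by
  obtain ⟨P, hP, hharm, hqP⟩ := hq.exists_harmonic_polynomial
  set H : ℕ → MvPolynomial (Fin (d + 1)) ℝ := fun j =>
    homogeneousComponent j (polyTranslate v.ofLp P) with hH
  have hHhom : ∀ j, (H j).IsHomogeneous j := fun j => homogeneousComponent_isHomogeneous j _
  have hHharm : ∀ j, polyLaplacian (H j) = 0 := fun j =>
    polyLaplacian_homogeneousComponent_eq_zero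
      (by rw [polyLaplacian_polyTranslate, hharm, map_zero]) j
  simp only [hqP, eval_reflv hP]
  rw [integral_finsetSum _ fun j _ => (integrable_eval_div_norm_pow
    (isHomogeneous_linearForm_pow_mul _ (hHhom j))).const_mul _,
    Finset.mul_sum]
  refine Finset.sum_congr rfl fun j _ => ?_
  rw [integral_const_mul, integral_eval_linearForm_pow_mul_div_norm_pow _ (hHhom j) (hHharm j), hH,
    eval_homogeneousComponent_polyTranslate_self hP, Nat.descFactorial_eq_factorial_mul_choose,
    neg_eq_neg_one_mul (2 : ℝ), mul_pow]
  push_cast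
  field_simp

theorem IsHk.cmk_mul_integral_comp_reflv_upP (hd : d ≠ 1) {k : ℕ} {q : Evec (d + 1) → ℝ}
    (hq : IsHk (d + 1) k q) (v : Evec (d + 1)) :
    cmk (d + 1) k * ∫ s, q (reflv (upP d s 1) v) ∂poissonMeasure d = q v := by
  set c : ℝ := ((d : ℝ) + 1) / 2 with hc
  have hc0 : 0 < c := by positivity
  have hc1 : c - 1 ≠ 0 := fun h => hd (by exact_mod_cast (by linarith : (d : ℝ) = 1))
  have hck : c - 1 + k ≠ 0 := fun h => by
    have hdk : d + 2 * k = 1 := by exact_mod_cast (by linarith : (d : ℝ) + 2 * k = 1)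
    omega
  have hm : ((d + 1 : ℕ) : ℝ) = 2 * c := by
    rw [hc]
    push_cast
    ring
  rw [hq.integral_comp_reflv_upP, ← hc,
    eq_div_of_mul_eq hck ((mul_comm _ _).trans (sum_descFactorial_div_Gamma hc0 k)), cmk,
    omegaS_eq_div_Gamma d.succ_pos, hm, mul_div_cancel_left₀ c two_ne_zero,
    show 2 * c + 2 * k - 2 = 2 * (c - 1 + k) by ring, show 2 * c - 2 = 2 * (c - 1) by ring]
  field_simp

end TotalMass

section TranslationModulus

theorem enorm_integral_sub_integral_le {α F : Type*} [MeasurableSpace α] [NormedAddCommGroup F]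
    [NormedSpace ℝ F] {κ : Measure α} {f g : α → F} (hf : AEStronglyMeasurable f κ)
    (hg : Integrable g κ) :
    ‖∫ s, f s ∂κ - ∫ s, g s ∂κ‖ₑ ≤ ∫⁻ s, ‖f s - g s‖ₑ ∂κ := by
  by_cases hfg : HasFiniteIntegral (fun s => f s - g s) κ
  · have hf' : Integrable f κ := by
      simpa using Integrable.add ⟨hf.sub hg.aestronglyMeasurable, hfg⟩ hg
    rw [← integral_sub hf' hg]
    exact enorm_integral_le_lintegral_enorm _
  · rw [hasFiniteIntegral_iff_enorm, not_lt_top_iff] at hfg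
    exact hfg ▸ le_top

theorem eLpNorm_ofReal_rpow {α F : Type*} [MeasurableSpace α] [NormedAddCommGroup F]
    {κ : Measure α} {p : ℝ} (hp : 0 < p) (f : α → F) :
    eLpNorm f (ENNReal.ofReal p) κ ^ p = ∫⁻ s, ‖f s‖ₑ ^ p ∂κ := by
  lift p to NNReal using hp.le
  rw [ENNReal.ofReal_coe_nnreal]
  exact eLpNorm_nnreal_pow_eq_lintegral (by exact_mod_cast hp.ne')

theorem lintegral_rpow_le_measure_univ_rpow_mul {α : Type*} [MeasurableSpace α] {κ : Measure α}
    {p : ℝ} (hp : 1 ≤ p) {g : α → ENNReal} (hg : AEMeasurable g κ) :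
    (∫⁻ s, g s ∂κ) ^ p ≤ κ Set.univ ^ (p - 1) * ∫⁻ s, g s ^ p ∂κ := by
  have hp0 : 0 < p := one_pos.trans_le hp
  have h := eLpNorm'_le_eLpNorm'_mul_rpow_measure_univ one_pos hp hg.aestronglyMeasurable
  simp only [eLpNorm', enorm_eq_self, ENNReal.rpow_one, div_one] at h
  calc (∫⁻ s, g s ∂κ) ^ p
      ≤ ((∫⁻ s, g s ^ p ∂κ) ^ (1 / p) * κ Set.univ ^ (1 - 1 / p)) ^ p := by gcongr
    _ = κ Set.univ ^ (p - 1) * ∫⁻ s, g s ^ p ∂κ := by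
        rw [ENNReal.mul_rpow_of_nonneg _ _ hp0.le, ← ENNReal.rpow_mul, ← ENNReal.rpow_mul,
          one_div_mul_cancel hp0.ne', ENNReal.rpow_one, sub_mul, one_mul,
          one_div_mul_cancel hp0.ne', mul_comm]

variable {E Y F : Type*} [NormedAddCommGroup E] [MeasurableSpace E] [MeasurableSpace Y]
  [NormedAddCommGroup F]

/-- The `L^p` modulus of continuity `h ↦ ‖f(· - h, ·) - f‖_p` of a function on `E × Y` under
translations of the first variable. -/
def translationModulus (p : ENNReal) (μ : Measure E) (ν : Measure Y) (f : E × Y → F) (h : E) :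
    ENNReal :=
  eLpNorm (fun z => f (z.1 - h, z.2) - f z) p (μ.prod ν)

variable {p : ENNReal} {μ : Measure E} {ν : Measure Y} {f : E × Y → F}

theorem translationModulus_zero : translationModulus p μ ν f 0 = 0 := by
  simp [translationModulus]

theorem lintegral_lintegral_rpow_le_lintegral_translationModulus {S : Type*} [MeasurableSpace S]
    [BorelSpace E] [SecondCountableTopology E] [MeasurableSpace F] [BorelSpace F]
    [SecondCountableTopology F] [SFinite μ] [SFinite ν] {κ : Measure S} [SFinite κ]
    {q : ℝ} (hq : 1 ≤ q) (hf : Measurable f)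
    {a : S → E} (ha : Measurable a) {R : S → Y → Y} (hR : Measurable (Function.uncurry R))
    (hRν : ∀ s, MeasurePreserving (R s) ν ν) :
    ∫⁻ x, ∫⁻ v, (∫⁻ s, ‖f (x - a s, R s v) - f (x, R s v)‖ₑ ∂κ) ^ q ∂ν ∂μ
      ≤ κ Set.univ ^ (q - 1) *
        ∫⁻ s, translationModulus (ENNReal.ofReal q) μ ν f (a s) ^ q ∂κ := by
  have hRz : Measurable fun w : (E × Y) × S => R w.2 w.1.2 :=
    hR.comp (measurable_snd.prodMk measurable_fst.snd)
  have hG : Measurable fun w : (E × Y) × S =>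
      ‖f (w.1.1 - a w.2, R w.2 w.1.2) - f (w.1.1, R w.2 w.1.2)‖ₑ :=
    ((hf.comp ((measurable_fst.fst.sub (ha.comp measurable_snd)).prodMk hRz)).sub
      (hf.comp (measurable_fst.fst.prodMk hRz))).enorm
  have hslice (s : S) :
      ∫⁻ z, ‖f (z.1 - a s, R s z.2) - f (z.1, R s z.2)‖ₑ ^ q ∂μ.prod ν
        = translationModulus (ENNReal.ofReal q) μ ν f (a s) ^ q := by
    have hmeas : Measurable fun z : E × Y => ‖f (z.1 - a s, z.2) - f z‖ₑ ^ q :=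
      ((hf.comp (by fun_prop : Measurable fun z : E × Y => (z.1 - a s, z.2))).sub
        hf).enorm.pow_const q
    rw [translationModulus, eLpNorm_ofReal_rpow (one_pos.trans_le hq)]
    exact ((MeasurePreserving.id μ).prod (hRν s)).lintegral_comp hmeas
  calc ∫⁻ x, ∫⁻ v, (∫⁻ s, ‖f (x - a s, R s v) - f (x, R s v)‖ₑ ∂κ) ^ q ∂ν ∂μ
      = ∫⁻ z, (∫⁻ s, ‖f (z.1 - a s, R s z.2) - f (z.1, R s z.2)‖ₑ ∂κ) ^ q ∂μ.prod ν :=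
        (lintegral_prod _ (hG.lintegral_prod_right'.pow_const q).aemeasurable).symm
    _ ≤ ∫⁻ z, κ Set.univ ^ (q - 1) *
          ∫⁻ s, ‖f (z.1 - a s, R s z.2) - f (z.1, R s z.2)‖ₑ ^ q ∂κ ∂μ.prod ν :=
        lintegral_mono fun z => lintegral_rpow_le_measure_univ_rpow_mul hq
          (hG.comp measurable_prodMk_left).aemeasurable
    _ = κ Set.univ ^ (q - 1) *
          ∫⁻ s, translationModulus (ENNReal.ofReal q) μ ν f (a s) ^ q ∂κ := by
        rw [lintegral_const_mul _ (hG.pow_const q).lintegral_prod_right',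
          lintegral_lintegral_swap (hG.pow_const q).aemeasurable]
        simp only [hslice]

variable [BorelSpace E] [μ.IsAddRightInvariant] [SFinite μ] [SFinite ν]

theorem measurePreserving_sub_prodMk [SecondCountableTopology E] (h : E) :
    MeasurePreserving (fun z : E × Y => (z.1 - h, z.2)) (μ.prod ν) (μ.prod ν) :=
  (measurePreserving_sub_right μ h).prod (.id ν)

theorem translationModulus_le [SecondCountableTopology E] (hp : 1 ≤ p)
    (hf : AEStronglyMeasurable f (μ.prod ν)) (h : E) :
    translationModulus p μ ν f h ≤ 2 * eLpNorm f p (μ.prod ν) := by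
  have hmp : MeasurePreserving (fun z : E × Y => (z.1 - h, z.2)) (μ.prod ν) (μ.prod ν) :=
    measurePreserving_sub_prodMk h
  refine (eLpNorm_sub_le (hf.comp_measurePreserving hmp) hf hp).trans_eq ?_
  rw [eLpNorm_comp_measurePreserving hf hmp, two_mul]

theorem continuous_translationModulus [SecondCountableTopology E] [TopologicalSpace Y]
    [BorelSpace Y] [R1Space Y] [SecondCountableTopology Y]
    [(μ.prod ν).InnerRegularCompactLTTop] [IsLocallyFiniteMeasure (μ.prod ν)]
    [hp1 : Fact (1 ≤ p)] (hp : p ≠ ⊤) (hf : MemLp f p (μ.prod ν)) :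
    Continuous (translationModulus p μ ν f) := by
  set T : E → C(E × Y, E × Y) := fun h => ⟨fun z => (z.1 - h, z.2), by fun_prop⟩
  have hTcont : Continuous T := ContinuousMap.continuous_of_continuous_uncurry _
    (show Continuous fun w : E × E × Y => (w.2.1 - w.1, w.2.2) by fun_prop)
  have hTmp : ∀ h, MeasurePreserving (T h) (μ.prod ν) (μ.prod ν) := fun h =>
    measurePreserving_sub_prodMk h
  have hcont := (continuous_const (y := hf.toLp)).compMeasurePreservingLp hTcont hTmp hp
  refine (hcont.edist (continuous_const (y := hf.toLp))).congr fun h => ?_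
  rw [Lp.toLp_compMeasurePreserving, Lp.edist_toLp_toLp]
  rfl

theorem tendsto_lintegral_translationModulus_smul [NormedSpace ℝ E] [SecondCountableTopology E]
    [TopologicalSpace Y] [BorelSpace Y] [R1Space Y] [SecondCountableTopology Y]
    [(μ.prod ν).InnerRegularCompactLTTop] [IsLocallyFiniteMeasure (μ.prod ν)]
    [hp1 : Fact (1 ≤ p)] (hp : p ≠ ⊤) (hf : MemLp f p (μ.prod ν)) {r : ℝ} (hr : 0 < r)
    (κ : Measure E) [IsFiniteMeasure κ] :
    Tendsto (fun y : ℝ => ∫⁻ s, translationModulus p μ ν f (y • s) ^ r ∂κ) (𝓝 0) (𝓝 0) := by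
  have hcont := continuous_translationModulus hp hf
  have hlim := tendsto_lintegral_filter_of_dominated_convergence (μ := κ) (l := 𝓝 (0 : ℝ))
    (F := fun y s => translationModulus p μ ν f (y • s) ^ r) (f := fun _ => 0)
    (fun _ => (2 * eLpNorm f p (μ.prod ν)) ^ r)
    (.of_forall fun y => (hcont.comp (continuous_const_smul y)).measurable.pow_const r)
    (.of_forall fun y => .of_forall fun s =>
      ENNReal.rpow_le_rpow (translationModulus_le hp1.out hf.1 _) hr.le) ?_
    (.of_forall fun s => ?_)
  · simpa only [lintegral_zero] using hlim
  · rw [lintegral_const]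
    exact ENNReal.mul_ne_top (ENNReal.rpow_ne_top_of_nonneg hr.le
      (ENNReal.mul_ne_top (by simp) hf.2.ne)) (measure_ne_top _ _)
  · have hy : Continuous fun y : ℝ => translationModulus p μ ν f (y • s) ^ r := by fun_prop
    refine hy.tendsto' 0 0 ?_
    rw [zero_smul, translationModulus_zero, ENNReal.zero_rpow_of_pos hr]

end TranslationModulus

section Reflections

variable {m d : ℕ}

theorem reflection_orthogonal_span_singleton (a u : Evec m) :
    (ℝ ∙ a)ᗮ.reflection u = reflv a u := by
  rw [Submodule.reflection_orthogonal_apply, Submodule.reflection_singleton_apply, reflv]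
  simp only [RCLike.ofReal_real_eq_id, id_eq, neg_sub]
  rw [← Nat.cast_smul_eq_nsmul ℝ, smul_smul, Nat.cast_ofNat, mul_div_assoc]

theorem reflv_reflv (a u : Evec m) : reflv a (reflv a u) = u := by
  simp only [← reflection_orthogonal_span_singleton, Submodule.reflection_reflection]

theorem norm_reflv (a u : Evec m) : ‖reflv a u‖ = ‖u‖ := by
  rw [← reflection_orthogonal_span_singleton, LinearIsometryEquiv.norm_map]

theorem reflv_smul {c : ℝ} (hc : c ≠ 0) (a u : Evec m) : reflv (c • a) u = reflv a u := by
  rw [reflv, reflv, norm_smul, mul_pow, Real.norm_eq_abs, sq_abs, real_inner_smul_left, smul_smul]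
  congr 2
  field_simp

theorem continuous_reflv_upP_one :
    Continuous fun z : Evec d × Evec (d + 1) => reflv (upP d z.1 1) z.2 := by
  have hup : Continuous fun z : Evec d × Evec (d + 1) => upP d z.1 1 :=
    continuous_upP_one.comp continuous_fst
  refine continuous_snd.sub (Continuous.fun_smul ?_ hup)
  exact (continuous_const.mul (hup.inner continuous_snd)).div₀ (hup.norm.pow 2) fun z =>
    pow_ne_zero 2 (norm_upP_one_pos z.1).ne'

end Reflections

section SphereMeasure

variable {m : ℕ}

instance : IsFiniteMeasure (sphereM m) := by
  unfold sphereM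
  infer_instance

theorem ae_sphereM_norm_eq_one : ∀ᵐ u ∂(sphereM m), ‖u‖ = 1 := by
  rw [sphereM, ae_map_iff measurable_subtype_coe.aemeasurable
    (measurableSet_eq_fun measurable_norm measurable_const)]
  exact .of_forall fun u => mem_sphere_zero_iff_norm.mp u.2

open scoped Pointwise

theorem sphereM_apply {B : Set (Evec m)} (hB : MeasurableSet B) :
    sphereM m B = m * volume (Set.Ioo (0 : ℝ) 1 • (sphere (0 : Evec m) 1 ∩ B)) := by
  rw [sphereM, Measure.map_apply measurable_subtype_coe hB, Measure.toSphere_apply' _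
    (measurable_subtype_coe hB), Subtype.image_preimage_coe, finrank_euclideanSpace,
    Fintype.card_fin]

theorem preimage_smul_sphere_inter {E : Type*} [SeminormedAddCommGroup E] [Module ℝ E]
    (A : E ≃ₗᵢ[ℝ] E) (s : Set ℝ) (r : ℝ) (B : Set E) :
    A ⁻¹' (s • (sphere 0 r ∩ B)) = s • (sphere 0 r ∩ A ⁻¹' B) := by
  ext x
  simp only [Set.mem_smul, Set.mem_preimage, Set.mem_inter_iff, mem_sphere_zero_iff_norm]
  constructor
  · rintro ⟨t, ht, z, ⟨hz, hzB⟩, hx⟩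
    refine ⟨t, ht, A.symm z, ⟨by simpa using hz, by simpa using hzB⟩, ?_⟩
    rw [← map_smul, hx, LinearIsometryEquiv.symm_apply_apply]
  · rintro ⟨t, ht, z, ⟨hz, hzB⟩, rfl⟩
    exact ⟨t, ht, A z, ⟨by simpa using hz, hzB⟩, by simp⟩

theorem measurePreserving_sphereM (A : Evec m ≃ₗᵢ[ℝ] Evec m) :
    MeasurePreserving A (sphereM m) (sphereM m) := by
  have hA : Measurable A := A.continuous.measurable
  refine ⟨hA, Measure.ext fun B hB => ?_⟩
  rw [Measure.map_apply hA hB, sphereM_apply (hA hB), sphereM_apply hB,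
    ← preimage_smul_sphere_inter,
    A.measurePreserving.measure_preimage_emb A.toHomeomorph.measurableEmbedding]

theorem measurePreserving_reflv_sphereM (a : Evec m) :
    MeasurePreserving (reflv a) (sphereM m) (sphereM m) := by
  convert measurePreserving_sphereM (ℝ ∙ a)ᗮ.reflection using 1
  exact funext fun u => (reflection_orthogonal_span_singleton a u).symm

end SphereMeasure

section PoissonIntegral

/-- A kernel on `ℝ^m` that reproduces `ℋ_k` from its values on the unit sphere and is invariant
under orthogonal transformations: what remains of `IsZk` when symmetry, the bound by `dim ℋ_k` and
`Z · v ∈ ℋ_k` are forgotten. -/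
structure IsInvariantReproducingKernel (m k : ℕ) (Z : Evec m → Evec m → ℝ) : Prop where
  reproducing : ∀ q, IsHk m k q → ∀ v, ∫ u, Z u v * q u ∂(sphereM m) = q v
  invariant : ∀ (A : Evec m ≃ₗᵢ[ℝ] Evec m) (u v : Evec m), Z (A u) (A v) = Z u v

theorem IsZk.isInvariantReproducingKernel {m k : ℕ} {Z : Evec m → Evec m → ℝ} (hZ : IsZk m k Z) :
    IsInvariantReproducingKernel m k Z :=
  ⟨hZ.2.1, hZ.2.2.2.2⟩

theorem IsInvariantReproducingKernel.apply_reflv {m k : ℕ} {Z : Evec m → Evec m → ℝ}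
    (hZ : IsInvariantReproducingKernel m k Z) (a u v : Evec m) :
    Z (reflv a u) v = Z u (reflv a v) := by
  rw [← hZ.invariant (ℝ ∙ a)ᗮ.reflection]
  simp only [reflection_orthogonal_span_singleton, reflv_reflv]

theorem IsHk.continuous {m k : ℕ} {q : Evec m → ℝ} (hq : IsHk m k q) : Continuous q := by
  obtain ⟨P, hP⟩ := hq.1
  rw [funext hP]
  exact (MvPolynomial.continuous_eval P).comp (PiLp.continuous_ofLp 2 _)

variable {d k : ℕ} {Z : Evec (d + 1) → Evec (d + 1) → ℝ} {f : Evec d → Evec (d + 1) → ℝ}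
  {v : Evec (d + 1)}

theorem integral_PH_mul (hZ : IsInvariantReproducingKernel (d + 1) k Z) (x' : Evec d) (y : ℝ)
    {t' : Evec d} (hf : ∃ q, IsHk (d + 1) k q ∧ ∀ u ∈ closedBall 0 1, f t' u = q u)
    (hv : ‖v‖ ≤ 1) :
    ∫ u, PH d k Z x' y t' u v * f t' u ∂(sphereM (d + 1))
      = cmk (d + 1) k *
        (y / ‖upP d (x' - t') y‖ ^ (d + 1) * f t' (reflv (upP d (x' - t') y) v)) := by
  obtain ⟨q, hq, hfq⟩ := hf
  simp only [PH, upP_sub, sub_zero]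
  set a := upP d (x' - t') y
  rw [hfq _ (by simpa [norm_reflv] using hv), ← hZ.reproducing q hq, ← integral_const_mul,
    ← integral_const_mul]
  refine integral_congr_ae ?_
  filter_upwards [ae_sphereM_norm_eq_one] with u hu
  rw [hfq u (by simp [hu]), hZ.apply_reflv]
  ring

theorem PHint_eq_integral_poissonMeasure (hZ : IsInvariantReproducingKernel (d + 1) k Z)
    (hf : ∀ t', ∃ q, IsHk (d + 1) k q ∧ ∀ u ∈ closedBall 0 1, f t' u = q u)
    (x' : Evec d) {y : ℝ} (hy : 0 < y) (hv : ‖v‖ ≤ 1) :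
    PHint d k Z f x' y v
      = cmk (d + 1) k * ∫ s, f (x' - y • s) (reflv (upP d s 1) v) ∂poissonMeasure d := by
  have hscale (s : Evec d) : poissonWeight d s • f (x' - y • s) (reflv (upP d s 1) v)
      = y ^ d * (y / ‖upP d (y • s) y‖ ^ (d + 1) *
        f (x' - y • s) (reflv (upP d (y • s) y) v)) := by
    have hup : upP d (y • s) y = y • upP d s 1 := by rw [← upP_smul, mul_one]
    have hs := norm_upP_one_pos s
    rw [hup, reflv_smul hy.ne', norm_smul, Real.norm_of_nonneg hy.le, poissonWeight,
      NNReal.smul_def, mul_pow, pow_succ y, smul_eq_mul]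
    push_cast
    field_simp
  have hsubst := Measure.integral_comp_smul (volume : Measure (Evec d))
    (fun t => y / ‖upP d t y‖ ^ (d + 1) * f (x' - t) (reflv (upP d t y) v)) y
  simp only [PHint, integral_PH_mul hZ _ _ (hf _) hv]
  rw [integral_const_mul, ← integral_sub_left_eq_self _ volume x', poissonMeasure,
    integral_withDensity_eq_integral_smul (measurable_poissonWeight d)]
  simp only [sub_sub_cancel, hscale]
  rw [integral_const_mul, hsubst, finrank_euclideanSpace_fin, abs_inv, abs_pow, abs_of_pos hy,
    smul_eq_mul, mul_inv_cancel_left₀ (pow_ne_zero d hy.ne')]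

theorem enorm_PHint_sub_le (hd : d ≠ 1) (hZ : IsInvariantReproducingKernel (d + 1) k Z)
    (hfm : Measurable (Function.uncurry f))
    (hf : ∀ t', ∃ q, IsHk (d + 1) k q ∧ ∀ u ∈ closedBall 0 1, f t' u = q u)
    (x' : Evec d) {y : ℝ} (hy : 0 < y) (hv : ‖v‖ ≤ 1) :
    ‖PHint d k Z f x' y v - f x' v‖ₑ
      ≤ ‖cmk (d + 1) k‖ₑ * ∫⁻ s, ‖f (x' - y • s) (reflv (upP d s 1) v)
          - f x' (reflv (upP d s 1) v)‖ₑ ∂poissonMeasure d := by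
  obtain ⟨q, hq, hfq⟩ := hf x'
  have hR : Continuous fun s : Evec d => reflv (upP d s 1) v :=
    continuous_reflv_upP_one.comp (.prodMk_left v)
  have hRv (s : Evec d) : reflv (upP d s 1) v ∈ closedBall 0 1 := by simpa [norm_reflv] using hv
  have hfR : (fun s => f x' (reflv (upP d s 1) v)) = fun s => q (reflv (upP d s 1) v) :=
    funext fun s => hfq _ (hRv s)
  have hint : Integrable (fun s => f x' (reflv (upP d s 1) v)) (poissonMeasure d) := by
    obtain ⟨C, hC⟩ := (isCompact_closedBall (0 : Evec (d + 1)) 1).exists_bound_of_continuousOn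
      hq.continuous.continuousOn
    exact hfR ▸ .of_bound (hq.continuous.comp hR).aestronglyMeasurable C
      (.of_forall fun s => hC _ (hRv s))
  have hfv : f x' v = cmk (d + 1) k * ∫ s, f x' (reflv (upP d s 1) v) ∂poissonMeasure d := by
    rw [hfR, hq.cmk_mul_integral_comp_reflv_upP hd, hfq v (by simpa using hv)]
  have hmeas : Measurable fun s => f (x' - y • s) (reflv (upP d s 1) v) :=
    hfm.comp ((by fun_prop : Measurable fun s : Evec d => x' - y • s).prodMk hR.measurable)
  rw [PHint_eq_integral_poissonMeasure hZ hf x' hy hv, hfv, ← mul_sub, enorm_mul]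
  gcongr
  exact enorm_integral_sub_integral_le hmeas.aestronglyMeasurable hint

end PoissonIntegral

section BoundaryConvergence

variable {d k : ℕ} {p : ℝ} {Z : Evec (d + 1) → Evec (d + 1) → ℝ}
  {f : Evec d → Evec (d + 1) → ℝ}

theorem lpH_eq_lintegral_enorm_rpow (hp : 0 ≤ p) (f : Evec d → Evec (d + 1) → ℝ) :
    lpH d p f = (∫⁻ x', ∫⁻ u, ‖f x' u‖ₑ ^ p ∂(sphereM (d + 1))) ^ (1 / p) := by
  simp only [lpH, ← ENNReal.ofReal_rpow_of_nonneg (abs_nonneg _) hp, Real.enorm_eq_ofReal_abs]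

theorem MemLpH.memLp (hp : 0 < p) (hf : MemLpH d k p f) :
    MemLp (Function.uncurry f) (ENNReal.ofReal p) (volume.prod (sphereM (d + 1))) := by
  obtain ⟨hfm : Measurable (Function.uncurry f), -, hfin⟩ := hf
  refine ⟨hfm.aestronglyMeasurable, ?_⟩
  rwa [eLpNorm_eq_lintegral_rpow_enorm_toReal (by simpa using hp) ENNReal.ofReal_ne_top,
    ENNReal.toReal_ofReal hp.le, lintegral_prod _ (hfm.enorm.pow_const p).aemeasurable,
    ← lpH_eq_lintegral_enorm_rpow hp.le]

theorem lpH_PHint_sub_le (hd : d ≠ 1) (hZ : IsInvariantReproducingKernel (d + 1) k Z)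
    (hp : 1 ≤ p) (hf : MemLpH d k p f) {y : ℝ} (hy : 0 < y) :
    lpH d p (fun x' v => PHint d k Z f x' y v - f x' v)
      ≤ ‖cmk (d + 1) k‖ₑ * (poissonMeasure d Set.univ ^ (p - 1) *
        ∫⁻ s, translationModulus (ENNReal.ofReal p) volume (sphereM (d + 1)) (Function.uncurry f)
          (y • s) ^ p ∂poissonMeasure d) ^ (1 / p) := by
  have hp0 : 0 < p := one_pos.trans_le hp
  obtain ⟨hfm, hfH, -⟩ := hf
  set C := ‖cmk (d + 1) k‖ₑ
  have hC : C ^ p ≠ ⊤ := ENNReal.rpow_ne_top_of_nonneg hp0.le enorm_ne_top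
  rw [lpH_eq_lintegral_enorm_rpow hp0.le, one_div, ENNReal.rpow_inv_le_iff hp0,
    ENNReal.mul_rpow_of_nonneg _ _ hp0.le, ← ENNReal.rpow_mul, inv_mul_cancel₀ hp0.ne',
    ENNReal.rpow_one]
  calc ∫⁻ x', ∫⁻ v, ‖PHint d k Z f x' y v - f x' v‖ₑ ^ p ∂sphereM (d + 1)
      ≤ ∫⁻ x', ∫⁻ v, C ^ p * (∫⁻ s, ‖f (x' - y • s) (reflv (upP d s 1) v)
          - f x' (reflv (upP d s 1) v)‖ₑ ∂poissonMeasure d) ^ p ∂sphereM (d + 1) := by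
        refine lintegral_mono fun x' => lintegral_mono_ae ?_
        filter_upwards [ae_sphereM_norm_eq_one] with v hv
        rw [← ENNReal.mul_rpow_of_nonneg _ _ hp0.le]
        gcongr
        exact enorm_PHint_sub_le hd hZ hfm hfH x' hy hv.le
    _ = C ^ p * ∫⁻ x', ∫⁻ v, (∫⁻ s, ‖f (x' - y • s) (reflv (upP d s 1) v)
          - f x' (reflv (upP d s 1) v)‖ₑ ∂poissonMeasure d) ^ p ∂sphereM (d + 1) := by
        simp only [lintegral_const_mul' _ _ hC]
    _ ≤ _ := by
        gcongr
        exact lintegral_lintegral_rpow_le_lintegral_translationModulus hp hfm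
          (a := fun s => y • s) (by fun_prop) (R := fun s => reflv (upP d s 1))
          continuous_reflv_upP_one.measurable fun s => measurePreserving_reflv_sphereM _

theorem stmt_5_general (hd : d ≠ 1) (hZ : IsInvariantReproducingKernel (d + 1) k Z)
    (hp : 1 ≤ p) (hf : MemLpH d k p f) :
    Tendsto (fun y : ℝ => lpH d p (fun x' v => PHint d k Z f x' y v - f x' v))
      (𝓝[>] (0 : ℝ)) (𝓝 0) := by
  have hp0 : 0 < p := one_pos.trans_le hp
  have : Fact (1 ≤ ENNReal.ofReal p) := ⟨by simpa using hp⟩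
  have hmod := tendsto_lintegral_translationModulus_smul ENNReal.ofReal_ne_top (hf.memLp hp0) hp0
    (poissonMeasure d)
  have hbound := ENNReal.Tendsto.const_mul (ENNReal.Tendsto.const_mul hmod (.inr <|
    ENNReal.rpow_ne_top_of_nonneg (sub_nonneg.2 hp) (measure_ne_top (poissonMeasure d) Set.univ))
    |>.ennrpow_const (1 / p)) (.inr (enorm_ne_top (x := cmk (d + 1) k)))
  rw [mul_zero, ENNReal.zero_rpow_of_pos (one_div_pos.2 hp0), mul_zero] at hbound
  refine tendsto_of_tendsto_of_tendsto_of_le_of_le' tendsto_const_nhds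
    (hbound.mono_left nhdsWithin_le_nhds) (.of_forall fun _ => zero_le) ?_
  filter_upwards [self_mem_nhdsWithin] with y hy
  exact lpH_PHint_sub_le hd hZ hp hf hy

end BoundaryConvergence

/-- `L^p` boundary convergence of the half-space Poisson integral.
Here `m = d+1 ≥ 3`. -/
theorem stmt_5 (d k : ℕ) (hm : 3 ≤ d + 1) (hk : 1 ≤ k)
    (Z : Evec (d + 1) → Evec (d + 1) → ℝ) (hZ : IsZk (d + 1) k Z)
    (p : ℝ) (hp : 1 ≤ p)
    (f : Evec d → Evec (d + 1) → ℝ) (hf : MemLpH d k p f) :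
    Tendsto (fun y : ℝ => lpH d p (fun x' v => PHint d k Z f x' y v - f x' v))
      (𝓝[>] (0 : ℝ)) (𝓝 0) :=
  stmt_5_general (by omega) hZ.isInvariantReproducingKernel hp hf
end
end

section
/- Let m ≥ 2 and let x, ζ be nonzero vectors in ℝ^m with x ≠ ζ. Then: (1) |x/|x|² − ζ/|ζ|²| = |x−ζ|/(|x|·|ζ|); and (2) for every u ∈ ℝ^m, R_{x/|x|² − ζ/|ζ|²}(u) = R_x(R_{x−ζ}(R_ζ(u))). (This is the inversion case of the Möbius covariance lemma; in Clifford notation it expresses the identities x^{-1} − ζ^{-1} = −x^{-1}(x−ζ)ζ^{-1} = −ζ^{-1}(x−ζ)x^{-1}.) -/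
noncomputable section

open MeasureTheory Metric Filter Topology
open scoped RealInnerProductSpace

/-!
In the Clifford algebra of `|·|²` one has `a u a = -|a|² R_a(u)`. The identities
`x⁻¹ - ζ⁻¹ = -x⁻¹(x - ζ)ζ⁻¹ = -ζ⁻¹(x - ζ)x⁻¹`, cleared of denominators, express a multiple `b` of
`x⁻¹ - ζ⁻¹` as the product of the vectors `x`, `x - ζ`, `ζ` in either order, so that
`b u b = x(x - ζ)ζ u ζ(x - ζ)x`. Comparing the scalars on both sides leaves
`R_b = R_x ∘ R_{x - ζ} ∘ R_ζ`.
-/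

open CliffordAlgebra Submodule

section QuadraticForm

variable {R M : Type*} [CommRing R] [AddCommGroup M] [Module R M] (Q : QuadraticForm R M)

theorem ι_injective [Invertible (2 : R)] : Function.Injective (ι Q) := by
  intro v w h
  apply (ExteriorAlgebra.ι_leftInverse (R := R) (M := M)).injective
  simpa only [equivExterior, changeFormEquiv_apply, changeForm_ι] using
    congrArg (equivExterior Q) h

theorem ι_smul_sub_smul (x z : M) :
    ι Q (Q z • x - Q x • z) = -(ι Q x * ι Q (x - z) * ι Q z) := by
  have hx : ι Q x * ι Q x * ι Q z = Q x • ι Q z := by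
    rw [ι_sq_scalar, ← Algebra.smul_def]
  have hz : ι Q x * ι Q z * ι Q z = Q z • ι Q x := by
    rw [mul_assoc, ι_sq_scalar, ← Algebra.commutes, ← Algebra.smul_def]
  rw [map_sub, map_sub, map_smul, map_smul, mul_sub, sub_mul, hx, hz, neg_sub]

theorem ι_smul_sub_smul_rev (x z : M) :
    ι Q (Q z • x - Q x • z) = -(ι Q z * ι Q (x - z) * ι Q x) := by
  rw [← neg_sub, map_neg, ι_smul_sub_smul, ← neg_sub x z, map_neg, mul_neg, neg_mul,
    neg_neg]

theorem ι_smul_sub_smul_mul_mul_self (x z : M) (a : CliffordAlgebra Q) :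
    ι Q (Q z • x - Q x • z) * a * ι Q (Q z • x - Q x • z) =
      ι Q x * (ι Q (x - z) * (ι Q z * a * ι Q z) * ι Q (x - z)) * ι Q x := by
  nth_rewrite 1 [ι_smul_sub_smul]
  rw [ι_smul_sub_smul_rev]
  noncomm_ring

end QuadraticForm

section InnerProductSpace

variable {E : Type*} [NormedAddCommGroup E] [InnerProductSpace ℝ E]

variable (E) in
/-- The quadratic form `v ↦ ‖v‖²`, whose Clifford algebra turns reflections into products. The sign
convention is `v * v = ‖v‖²`. -/
def normSqForm : QuadraticForm ℝ E := LinearMap.BilinMap.toQuadraticMap (innerₗ E)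

theorem normSqForm_apply (v : E) : normSqForm E v = ‖v‖ ^ 2 :=
  real_inner_self_eq_norm_sq v

theorem polar_normSqForm (v w : E) : QuadraticMap.polar (normSqForm E) v w = 2 * ⟪v, w⟫ := by
  simp only [normSqForm, LinearMap.BilinMap.polar_toQuadraticMap, innerₗ_apply_apply,
    real_inner_comm v w, two_mul]

theorem reflection_orthogonal_span_singleton_apply (v u : E) :
    (ℝ ∙ v)ᗮ.reflection u = u - (2 * ⟪v, u⟫ / ‖v‖ ^ 2) • v := by
  rw [reflection_orthogonal_apply, reflection_singleton_apply, neg_sub, ← Nat.cast_smul_eq_nsmul ℝ,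
    smul_smul, Nat.cast_ofNat, RCLike.ofReal_real_eq_id, id, mul_div_assoc]

theorem ι_mul_ι_mul_ι_eq_smul_reflection (v u : E) :
    ι (normSqForm E) v * ι (normSqForm E) u * ι (normSqForm E) v =
      -‖v‖ ^ 2 • ι (normSqForm E) ((ℝ ∙ v)ᗮ.reflection u) := by
  rw [ι_mul_ι_mul_ι, ← map_smul, polar_normSqForm, normSqForm_apply,
    reflection_orthogonal_span_singleton_apply]
  congr 1
  rcases eq_or_ne v 0 with rfl | hv
  · simp
  · match_scalars <;> field_simp

theorem norm_inv_normSq_smul_sub {x z : E} (hx : x ≠ 0) (hz : z ≠ 0) :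
    ‖(‖x‖ ^ 2)⁻¹ • x - (‖z‖ ^ 2)⁻¹ • z‖ = ‖x - z‖ / (‖x‖ * ‖z‖) := by
  simpa only [dist_eq_norm, one_div, inv_pow, one_pow, inv_mul_eq_div] using
    dist_div_norm_sq_smul hx hz 1

theorem normSq_smul_sub_eq_smul {x z : E} (hx : x ≠ 0) (hz : z ≠ 0) :
    ‖z‖ ^ 2 • x - ‖x‖ ^ 2 • z =
      (‖x‖ ^ 2 * ‖z‖ ^ 2) • ((‖x‖ ^ 2)⁻¹ • x - (‖z‖ ^ 2)⁻¹ • z) := by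
  match_scalars <;> field_simp

theorem norm_normSq_smul_sub (x z : E) :
    ‖‖z‖ ^ 2 • x - ‖x‖ ^ 2 • z‖ = ‖x‖ * ‖x - z‖ * ‖z‖ := by
  rcases eq_or_ne x 0 with rfl | hx
  · simp
  rcases eq_or_ne z 0 with rfl | hz
  · simp
  rw [normSq_smul_sub_eq_smul hx hz, norm_smul, norm_inv_normSq_smul_sub hx hz,
    Real.norm_of_nonneg (by positivity)]
  field_simp

theorem reflection_normSq_smul_sub {x z : E} (hx : x ≠ 0) (hz : z ≠ 0) (u : E) :
    (ℝ ∙ (‖z‖ ^ 2 • x - ‖x‖ ^ 2 • z))ᗮ.reflection u =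
      (ℝ ∙ x)ᗮ.reflection ((ℝ ∙ (x - z))ᗮ.reflection ((ℝ ∙ z)ᗮ.reflection u)) := by
  rcases eq_or_ne x z with rfl | hxz
  · simp [reflection_mem_subspace_eq_self]
  have hscalar : -(‖x‖ * ‖x - z‖ * ‖z‖) ^ 2 ≠ 0 := by
    simp [hx, hz, sub_ne_zero.mpr hxz]
  have hsandwich := ι_smul_sub_smul_mul_mul_self (normSqForm E) x z (ι (normSqForm E) u)
  simp only [normSqForm_apply, ι_mul_ι_mul_ι_eq_smul_reflection, mul_smul_comm, smul_mul_assoc,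
    smul_smul, norm_normSq_smul_sub] at hsandwich
  apply ι_injective (normSqForm E)
  apply smul_right_injective _ hscalar
  convert hsandwich using 2
  ring

theorem stmt_6_general {x z : E} (hx : x ≠ 0) (hz : z ≠ 0) :
    ‖(‖x‖ ^ 2)⁻¹ • x - (‖z‖ ^ 2)⁻¹ • z‖ = ‖x - z‖ / (‖x‖ * ‖z‖) ∧
    ∀ u : E,
      (ℝ ∙ ((‖x‖ ^ 2)⁻¹ • x - (‖z‖ ^ 2)⁻¹ • z))ᗮ.reflection u =
        (ℝ ∙ x)ᗮ.reflection ((ℝ ∙ (x - z))ᗮ.reflection ((ℝ ∙ z)ᗮ.reflection u)) := by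
  refine ⟨norm_inv_normSq_smul_sub hx hz, fun u => ?_⟩
  have hunit : IsUnit (‖x‖ ^ 2 * ‖z‖ ^ 2) := by simp [hx, hz]
  simp only [← reflection_normSq_smul_sub hx hz, normSq_smul_sub_eq_smul hx hz,
    span_singleton_smul_eq hunit]

end InnerProductSpace

theorem reflv_eq_reflection {m : ℕ} (a u : Evec m) : reflv a u = (ℝ ∙ a)ᗮ.reflection u :=
  (reflection_orthogonal_span_singleton_apply a u).symm

/-- inversion case of the Möbius covariance lemma, Lemma `lem1`. -/
theorem stmt_6 (m : ℕ) (hm : 2 ≤ m) (x ζ : Evec m) (hx : x ≠ 0) (hζ : ζ ≠ 0)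
    (hxζ : x ≠ ζ) :
    ‖(‖x‖ ^ 2)⁻¹ • x - (‖ζ‖ ^ 2)⁻¹ • ζ‖ = ‖x - ζ‖ / (‖x‖ * ‖ζ‖) ∧
    ∀ u : Evec m,
      reflv ((‖x‖ ^ 2)⁻¹ • x - (‖ζ‖ ^ 2)⁻¹ • ζ) u =
        reflv x (reflv (x - ζ) (reflv ζ u)) := by
  simpa only [reflv_eq_reflection] using stmt_6_general hx hζ
end
end
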